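/- arXiv:2605.30147 — 5 statements merged into one kernel-verified Lean document; each statement's English description precedes it below -/
import Mathlib

section
/- Let Z and X be topological spaces, ρ : Z → Z a homeomorphism, and x : ℕ → X a sequence. Let P be the infinite path space of the associated topological graph, i.e. the set of sequences e : ℕ → Z × X × ℕ such that, writing e(i) = (z_i, χ_i, m_i), one has z_i = ρ(z_{i+1}) and χ_i = x_{m_{i+1}} for all i ∈ ℕ, equipped with the subspace topology induced from the product topology on (Z × X × ℕ)^ℕ (with ℕ discrete). Then the map F : Z × ℕ^ℕ → P defined by F(z, n)(i) = (ρ^{-(i+1)}(z), x(n(i+1)), n(i)) for i ∈ ℕ is a homeomorphism from Z × ℕ^ℕ (product topology, ℕ^ℕ with the product of discrete topologies) onto P. In particular, P is homeomorphic to Z × ℕ^ℕ. -/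
/-!
A path determines its labels `n`, and all its `Z`-coordinates are determined by `z = ρ z₀`, since
`zᵢ = ρ zᵢ₊₁` forces `zᵢ = ρ⁻⁽ⁱ⁺¹⁾ z`; the `X`-coordinates are then forced to be
`x (n (i + 1))`. So `e ↦ (ρ z₀, n)` inverts the map in question, and both maps are continuous
because each coordinate of the value depends continuously on finitely many coordinates of the
argument.
-/

open Function

section InfinitePathSpace

variable {Z X A : Type*}

/-- The infinite path space of the graph with vertices `Z × X`, edges `Z × X × A`, domain map
`d (z, χ, a) = (z, χ)` and range map `r (z, χ, a) = (f z, x a)`. The condition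
`d (e i) = r (e (i + 1))` is split into its two coordinates. -/
def infinitePathSpace (f : Z → Z) (x : A → X) : Set (ℕ → Z × X × A) :=
  {e | ∀ i, (e i).1 = f (e (i + 1)).1 ∧ (e i).2.1 = x (e (i + 1)).2.2}

/-- The infinite path with label sequence `n` whose initial edge has range `(z, x (n 0))`, where
`g` stands for the inverse of the map `f` in `infinitePathSpace f x`. -/
def pathOfLabels (g : Z → Z) (x : A → X) (z : Z) (n : ℕ → A) (i : ℕ) : Z × X × A :=
  (g^[i + 1] z, x (n (i + 1)), n i)

theorem pathOfLabels_mem_infinitePathSpace {f g : Z → Z} (hfg : LeftInverse f g) (x : A → X)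
    (z : Z) (n : ℕ → A) : pathOfLabels g x z n ∈ infinitePathSpace f x := by
  refine fun i ↦ ⟨?_, rfl⟩
  simp only [pathOfLabels, iterate_succ_apply' g (i + 1), hfg _]

theorem iterate_apply_zero_of_forall_eq_apply_succ {f g : Z → Z} (hgf : LeftInverse g f)
    {z : ℕ → Z} (hz : ∀ i, z i = f (z (i + 1))) (i : ℕ) : g^[i] (z 0) = z i := by
  induction i with
  | zero => rfl
  | succ i ih => rw [iterate_succ_apply', ih, hz i, hgf]

theorem pathOfLabels_eq_of_mem_infinitePathSpace {f g : Z → Z} (hgf : LeftInverse g f) {x : A → X}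
    {e : ℕ → Z × X × A} (he : e ∈ infinitePathSpace f x) :
    pathOfLabels g x (f (e 0).1) (fun i ↦ (e i).2.2) = e := by
  funext i
  have hZ : g^[i + 1] (f (e 0).1) = (e i).1 := by
    rw [iterate_succ_apply, hgf]
    exact iterate_apply_zero_of_forall_eq_apply_succ hgf (fun j ↦ (he j).1) i
  exact Prod.ext hZ (Prod.ext (he i).2.symm rfl)

/-- The parametrization of infinite paths by the `Z`-coordinate of the range of their initial edge
together with their label sequence. -/
def infinitePathSpaceEquiv (ρ : Z ≃ Z) (x : A → X) : Z × (ℕ → A) ≃ infinitePathSpace ρ x where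
  toFun p := ⟨pathOfLabels ρ.symm x p.1 p.2,
    pathOfLabels_mem_infinitePathSpace ρ.apply_symm_apply x p.1 p.2⟩
  invFun e := (ρ (e.1 0).1, fun i ↦ (e.1 i).2.2)
  left_inv p := Prod.ext (ρ.apply_symm_apply p.1) rfl
  right_inv e := Subtype.ext (pathOfLabels_eq_of_mem_infinitePathSpace ρ.symm_apply_apply e.2)

variable [TopologicalSpace Z] [TopologicalSpace X] [TopologicalSpace A]

theorem continuous_pathOfLabels {g : Z → Z} {x : A → X} (hg : Continuous g) (hx : Continuous x) :
    Continuous fun p : Z × (ℕ → A) ↦ pathOfLabels g x p.1 p.2 := by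
  refine continuous_pi fun i ↦ ?_
  have hZ : Continuous fun p : Z × (ℕ → A) ↦ g^[i + 1] p.1 := (hg.iterate _).comp continuous_fst
  exact hZ.prodMk (by fun_prop)

/-- `infinitePathSpaceEquiv` as a homeomorphism; `infinitePathSpace ρ x` carries the subspace
topology of the product topology. -/
def infinitePathSpaceHomeomorph (ρ : Z ≃ₜ Z) {x : A → X} (hx : Continuous x) :
    Z × (ℕ → A) ≃ₜ infinitePathSpace ρ x where
  toEquiv := infinitePathSpaceEquiv ρ.toEquiv x
  continuous_toFun := (continuous_pathOfLabels ρ.symm.continuous hx).subtype_mk _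
  continuous_invFun := by
    have h : Continuous fun e : ℕ → Z × X × A ↦ (ρ (e 0).1, fun i ↦ (e i).2.2) := by fun_prop
    exact h.comp continuous_subtype_val

theorem stmt5_general (ρ : Z ≃ₜ Z) {x : A → X} (hx : Continuous x) :
    ∃ F : Z × (ℕ → A) ≃ₜ infinitePathSpace ρ x,
      ∀ (z : Z) (n : ℕ → A) (i : ℕ),
        (F (z, n) : ℕ → Z × X × A) i = ((⇑ρ.symm)^[i + 1] z, x (n (i + 1)), n i) :=
  ⟨infinitePathSpaceHomeomorph ρ hx, fun _ _ _ ↦ rfl⟩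

end InfinitePathSpace

/-- The infinite path space of the topological graph associated to
`(Z, X, ρ, x)` is homeomorphic to `Z × ℕ^ℕ`, via the map
`F(z, n)(i) = (ρ^{-(i+1)}(z), x(n(i+1)), n(i))`. -/
theorem stmt5 {Z X : Type*} [TopologicalSpace Z] [TopologicalSpace X]
    (ρ : Z ≃ₜ Z) (x : ℕ → X) :
    ∃ F : (Z × (ℕ → ℕ)) ≃ₜ
        {e : ℕ → Z × X × ℕ //
          ∀ i : ℕ, (e i).1 = ρ ((e (i + 1)).1) ∧ (e i).2.1 = x ((e (i + 1)).2.2)},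
      ∀ (z : Z) (n : ℕ → ℕ) (i : ℕ),
        (F (z, n) : ℕ → Z × X × ℕ) i = ((⇑ρ.symm)^[i + 1] z, x (n (i + 1)), n i) :=
  stmt5_general ρ (x := x) continuous_of_discreteTopology
end

section
/- Let Z and X be topological spaces, ρ : Z → Z a homeomorphism, x : ℕ → X a sequence, and k ∈ ℕ with k ≥ 1. Let E^k be the space of paths of length k of the associated topological graph, i.e. the set of tuples e : Fin k → Z × X × ℕ such that, writing e(i) = (z_i, χ_i, m_i), one has z_i = ρ(z_{i+1}) and χ_i = x_{m_{i+1}} for all i < k−1, equipped with the subspace topology induced from the product topology on (Z × X × ℕ)^k (with ℕ discrete). Then the map F_k : Z × X × ℕ^k → E^k defined by F_k(z, χ, n)(i) = (ρ^{-(i+1)}(z), x(n(i+1)), n(i)) for i < k−1 and F_k(z, χ, n)(k−1) = (ρ^{-k}(z), χ, n(k−1)) is a homeomorphism. In particular, E^k is homeomorphic to Z × X × ℕ^k. -/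
/-!
A path with edges `(zᵢ, χᵢ, mᵢ)` is determined by its labels `mᵢ`, the base point `ρ z₀` of its
range and the last coordinate `χₖ₋₁`: the relation `zᵢ = ρ zᵢ₊₁` forces `zᵢ = ρ⁻⁽ⁱ⁺¹⁾ (ρ z₀)`, and
`χᵢ = x mᵢ₊₁` gives every other `χᵢ`. These data can be chosen freely, and both passages are built
coordinatewise from `ρ`, `ρ⁻¹`, `x` and projections, hence continuous.
-/

theorem not_val_add_one_lt_iff_eq_top {k : ℕ} [NeZero k] {i : Fin k} :
    ¬(i : ℕ) + 1 < k ↔ i = ⊤ := by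
  rw [Fin.ext_iff, Fin.val_top]
  omega

section Algebra

variable {Z X M : Type*} {k : ℕ}

/-- Paths of length `k` in the graph with vertices `Z × X`, edges `Z × X × M`, domain map
`(z, χ, m) ↦ (z, χ)` and range map `(z, χ, m) ↦ (ρ z, x m)`: the domain of each edge is the range of
the next one. -/
def IsEdgePath (ρ : Z → Z) (x : M → X) (e : Fin k → Z × X × M) : Prop :=
  ∀ (i : ℕ) (h : i + 1 < k),
    (e ⟨i, Nat.lt_of_succ_lt h⟩).1 = ρ (e ⟨i + 1, h⟩).1 ∧
    (e ⟨i, Nat.lt_of_succ_lt h⟩).2.1 = x (e ⟨i + 1, h⟩).2.2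

/-- The path with parameters `(z, χ, n)`, the map `F_k` of the paper: its range has base point `z`,
its last edge has `X`-coordinate `χ`, and its labels are `n`. The two cases of `F_k` differ only in
the `X`-coordinate, since `i + 1 = k` at the last edge. -/
def edgePath (ρ : Z ≃ Z) (x : M → X) (p : Z × X × (Fin k → M)) (i : Fin k) : Z × X × M :=
  (ρ.symm^[(i : ℕ) + 1] p.1,
    if h : (i : ℕ) + 1 < k then x (p.2.2 ⟨(i : ℕ) + 1, h⟩) else p.2.1,
    p.2.2 i)

/-- The parameters `(z, χ, n)` of a nonempty path, read off as the base point of its range, the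
`X`-coordinate of its last edge (indexed by `⊤ : Fin k`), and its labels. -/
def edgePathParams [NeZero k] (ρ : Z → Z) (e : Fin k → Z × X × M) : Z × X × (Fin k → M) :=
  (ρ (e 0).1, (e ⊤).2.1, fun i => (e i).2.2)

theorem edgePath_apply_eq_dite (ρ : Z ≃ Z) (x : M → X) (z : Z) (χ : X) (n : Fin k → M)
    (i : Fin k) :
    edgePath ρ x (z, χ, n) i =
      if h : (i : ℕ) + 1 < k then (ρ.symm^[(i : ℕ) + 1] z, x (n ⟨(i : ℕ) + 1, h⟩), n i)
      else (ρ.symm^[k] z, χ, n i) := by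
  unfold edgePath
  split_ifs with h
  · rfl
  · have last_index : (i : ℕ) + 1 = k := by omega
    rw [last_index]

theorem isEdgePath_edgePath (ρ : Z ≃ Z) (x : M → X) (p : Z × X × (Fin k → M)) :
    IsEdgePath ρ x (edgePath ρ x p) := by
  intro i h
  constructor
  · simp only [edgePath, Function.iterate_succ_apply' _ (i + 1), Equiv.apply_symm_apply]
  · simp only [edgePath, h, dite_true]

theorem edgePathParams_edgePath [NeZero k] (ρ : Z ≃ Z) (x : M → X) (p : Z × X × (Fin k → M)) :
    edgePathParams ρ (edgePath ρ x p) = p := by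
  refine Prod.ext ?base (Prod.ext ?coord rfl)
  case base => simp [edgePathParams, edgePath]
  case coord => exact dif_neg (not_val_add_one_lt_iff_eq_top.mpr rfl)

theorem IsEdgePath.iterate_symm_fst_zero [NeZero k] {ρ : Z ≃ Z} {x : M → X}
    {e : Fin k → Z × X × M} (he : IsEdgePath ρ x e) (i : Fin k) :
    ρ.symm^[(i : ℕ)] (e 0).1 = (e i).1 := by
  obtain ⟨i, hi⟩ := i
  induction i with
  | zero => rfl
  | succ i ih =>
    rw [Function.iterate_succ_apply', ih (Nat.lt_of_succ_lt hi), (he i hi).1,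
      Equiv.symm_apply_apply]

theorem IsEdgePath.edgePath_edgePathParams [NeZero k] {ρ : Z ≃ Z} {x : M → X}
    {e : Fin k → Z × X × M} (he : IsEdgePath ρ x e) :
    edgePath ρ x (edgePathParams ρ e) = e := by
  funext i
  refine Prod.ext ?base (Prod.ext ?coord rfl)
  case base =>
    simp only [edgePath, edgePathParams, Function.iterate_succ_apply, Equiv.symm_apply_apply,
      he.iterate_symm_fst_zero]
  case coord =>
    by_cases h : (i : ℕ) + 1 < k
    · simp only [edgePath, edgePathParams, h, dite_true, (he i h).2]
    · obtain rfl := not_val_add_one_lt_iff_eq_top.mp h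
      exact dif_neg h

end Algebra

section Topology

variable {Z X M : Type*} [TopologicalSpace Z] [TopologicalSpace X] [TopologicalSpace M] {k : ℕ}

theorem continuous_edgePath {ρ : Z ≃ Z} (hρ : Continuous ρ.symm) {x : M → X} (hx : Continuous x) :
    Continuous (edgePath ρ x : Z × X × (Fin k → M) → Fin k → Z × X × M) := by
  refine continuous_pi fun i => ?_
  have base_continuous : Continuous ρ.symm^[(i : ℕ) + 1] := hρ.iterate _
  refine (base_continuous.comp continuous_fst).prodMk (Continuous.prodMk ?_ (by fun_prop))
  split_ifs <;> fun_prop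

theorem continuous_edgePathParams [NeZero k] {ρ : Z → Z} (hρ : Continuous ρ) :
    Continuous (edgePathParams ρ : (Fin k → Z × X × M) → Z × X × (Fin k → M)) := by
  unfold edgePathParams
  fun_prop

/-- The parametrisation of the space of paths of length `k ≥ 1` by `Z × X × M ^ k`. -/
def edgePathHomeomorph [NeZero k] (ρ : Z ≃ₜ Z) {x : M → X} (hx : Continuous x) :
    (Z × X × (Fin k → M)) ≃ₜ {e : Fin k → Z × X × M // IsEdgePath ρ x e} where
  toFun p := ⟨edgePath ρ.toEquiv x p, isEdgePath_edgePath ρ.toEquiv x p⟩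
  invFun e := edgePathParams ρ e.1
  left_inv p := edgePathParams_edgePath ρ.toEquiv x p
  right_inv e := Subtype.ext (IsEdgePath.edgePath_edgePathParams (ρ := ρ.toEquiv) e.2)
  continuous_toFun := (continuous_edgePath ρ.symm.continuous hx).subtype_mk _
  continuous_invFun := (continuous_edgePathParams ρ.continuous).comp continuous_subtype_val

end Topology

theorem stmt6_general {Z X M : Type*} [TopologicalSpace Z] [TopologicalSpace X]
    [TopologicalSpace M] (ρ : Z ≃ₜ Z) {x : M → X} (hx : Continuous x) (k : ℕ) [NeZero k] :
    ∃ F : (Z × X × (Fin k → M)) ≃ₜ {e : Fin k → Z × X × M // IsEdgePath ρ x e},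
      ∀ (z : Z) (χ : X) (n : Fin k → M) (i : Fin k),
        (F (z, χ, n) : Fin k → Z × X × M) i =
          if h : (i : ℕ) + 1 < k then
            ((⇑ρ.symm)^[(i : ℕ) + 1] z, x (n ⟨(i : ℕ) + 1, h⟩), n i)
          else ((⇑ρ.symm)^[k] z, χ, n i) :=
  ⟨edgePathHomeomorph ρ hx, edgePath_apply_eq_dite ρ.toEquiv x⟩

/-- The space of paths of length `k ≥ 1` of the topological graph associated
to `(Z, X, ρ, x)` is homeomorphic to `Z × X × ℕ^k`, via the map
`F_k(z, χ, n)(i) = (ρ^{-(i+1)}(z), x(n(i+1)), n(i))` for `i < k - 1` and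
`F_k(z, χ, n)(k-1) = (ρ^{-k}(z), χ, n(k-1))`. -/
theorem stmt6 {Z X : Type*} [TopologicalSpace Z] [TopologicalSpace X]
    (ρ : Z ≃ₜ Z) (x : ℕ → X) (k : ℕ) (hk : 1 ≤ k) :
    ∃ F : (Z × X × (Fin k → ℕ)) ≃ₜ
        {e : Fin k → Z × X × ℕ //
          ∀ (i : ℕ) (h : i + 1 < k),
            (e ⟨i, Nat.lt_of_succ_lt h⟩).1 = ρ ((e ⟨i + 1, h⟩).1) ∧
            (e ⟨i, Nat.lt_of_succ_lt h⟩).2.1 = x ((e ⟨i + 1, h⟩).2.2)},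
      ∀ (z : Z) (χ : X) (n : Fin k → ℕ) (i : Fin k),
        (F (z, χ, n) : Fin k → Z × X × ℕ) i =
          if h : (i : ℕ) + 1 < k then
            ((⇑ρ.symm)^[(i : ℕ) + 1] z, x (n ⟨(i : ℕ) + 1, h⟩), n i)
          else ((⇑ρ.symm)^[k] z, χ, n i) := by
  have : NeZero k := NeZero.of_pos hk
  exact stmt6_general ρ (continuous_of_discreteTopology (f := x)) k
end

section
/- Let Z and X be topological spaces, ρ : Z → Z a homeomorphism, and x : ℕ → X a sequence such that every nonempty open subset of X contains x_m for infinitely many indices m ∈ ℕ. Define r : Z × X × ℕ → Z × X by r(z, χ, m) = (ρ(z), x_m), where ℕ carries the discrete topology. Then for every nonempty open subset V ⊆ Z × X, the preimage r⁻¹(V) is not compact. In particular, the associated topological graph has no regular vertices. -/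
/-!
Some slice `{m | (ρ w, x m) ∈ V}` of the preimage is infinite, because the slice of `V` over a
point `ρ w` contains a nonempty open subset of `X`. Projecting the preimage to the discrete index
space would therefore turn compactness into finiteness of an infinite set.
-/

section

variable {W X Y Z ι : Type*} [TopologicalSpace X] [TopologicalSpace Z]

theorem not_isCompact_of_infinite_image [TopologicalSpace Y] [TopologicalSpace ι]
    [DiscreteTopology ι] {f : Y → ι} (hf : Continuous f) {K : Set Y} (hK : (f '' K).Infinite) :
    ¬ IsCompact K :=
  fun hcompact => hK (hcompact.image hf).finite_of_discrete

theorem exists_infinite_setOf_prodMk_mem {ρ : W → Z} (hρ : DenseRange ρ) {x : ι → X}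
    (hx : ∀ U : Set X, IsOpen U → U.Nonempty → {m : ι | x m ∈ U}.Infinite)
    {V : Set (Z × X)} (hV : (interior V).Nonempty) :
    ∃ w, {m : ι | (ρ w, x m) ∈ V}.Infinite := by
  obtain ⟨⟨z, χ⟩, hzχ⟩ := hV
  obtain ⟨w, hw⟩ : ∃ w, (ρ w, χ) ∈ interior V :=
    hρ.exists_mem_open (isOpen_interior.preimage (Continuous.prodMk_left χ)) ⟨z, hzχ⟩
  have hslice : {m : ι | (ρ w, x m) ∈ interior V}.Infinite :=
    hx (Prod.mk (ρ w) ⁻¹' interior V)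
      (isOpen_interior.preimage (Continuous.prodMk_right (ρ w))) ⟨χ, hw⟩
  exact ⟨w, hslice.mono fun _ hm => interior_subset (s := V) hm⟩

/-- Every neighbourhood of a vertex has nonempty interior, so this excludes regular vertices. -/
theorem stmt7_general [TopologicalSpace W] [TopologicalSpace Y] [Nonempty Y] [TopologicalSpace ι]
    [DiscreteTopology ι] {ρ : W → Z} (hρ : DenseRange ρ) {x : ι → X}
    (hx : ∀ U : Set X, IsOpen U → U.Nonempty → {m : ι | x m ∈ U}.Infinite)
    {V : Set (Z × X)} (hV : (interior V).Nonempty) :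
    ¬ IsCompact ((fun p : W × Y × ι => (ρ p.1, x p.2.2)) ⁻¹' V) := by
  obtain ⟨w, hw⟩ := exists_infinite_setOf_prodMk_mem hρ hx hV
  obtain ⟨y⟩ := ‹Nonempty Y›
  have hproj : Continuous fun p : W × Y × ι => p.2.2 := by fun_prop
  exact not_isCompact_of_infinite_image hproj <| hw.mono fun m hm => ⟨(w, y, m), hm, rfl⟩

end

/-- If the sequence `x` visits every nonempty open subset of `X` infinitely
often, then the preimage of any nonempty open `V ⊆ Z × X` under the range map
`r(z, χ, m) = (ρ(z), x_m)` of the associated topological graph is not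
compact; in particular the graph has no regular vertices. -/
theorem stmt7 {Z X : Type*} [TopologicalSpace Z] [TopologicalSpace X]
    (ρ : Z ≃ₜ Z) (x : ℕ → X)
    (hx : ∀ U : Set X, IsOpen U → U.Nonempty → {m : ℕ | x m ∈ U}.Infinite)
    (V : Set (Z × X)) (hVopen : IsOpen V) (hVne : V.Nonempty) :
    ¬ IsCompact ((fun p : Z × X × ℕ => ((ρ p.1 : Z), x p.2.2)) ⁻¹' V) := by
  have : Nonempty X := ⟨x 0⟩
  exact stmt7_general ρ.surjective.denseRange hx (hVopen.interior_eq.symm ▸ hVne)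
end

section
/- Let Z be an infinite T1 topological space, ρ : Z → Z a minimal homeomorphism, X a topological space, and x : ℕ → X a sequence. Let P be the set of sequences e : ℕ → Z × X × ℕ such that, writing e(i) = (z_i, χ_i, m_i), one has z_i = ρ(z_{i+1}) and χ_i = x_{m_{i+1}} for all i ∈ ℕ. Then the shift on P is free in the following sense: for every e ∈ P and all k, l ∈ ℕ, if e(i + k) = e(i + l) for all i ∈ ℕ, then k = l. -/
/-!
The `Z`-coordinates of an infinite path form a backward orbit of `ρ`, and a point that a backward
orbit visits twice is periodic. The forward orbit of a periodic point is a finite set mapped onto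
itself; in a T1 space it is closed, so minimality would force it to be the whole space, which is
infinite.
-/

open Function Set

section Orbits

variable {α : Type*} {f : α → α} {a : α} {z : ℕ → α}

theorem finite_range_iterate_of_mem_periodicPts (ha : a ∈ periodicPts f) :
    (range fun n ↦ f^[n] a).Finite := by
  obtain ⟨p, hp, hper⟩ := ha
  refine ((finite_Iio p).image fun n ↦ f^[n] a).subset ?_
  rintro _ ⟨n, rfl⟩
  exact ⟨n % p, Nat.mod_lt n hp, hper.iterate_mod_apply n⟩

theorem image_range_iterate_of_mem_periodicPts (ha : a ∈ periodicPts f) :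
    f '' (range fun n ↦ f^[n] a) = range fun n ↦ f^[n] a := by
  obtain ⟨p, hp, hper⟩ := ha
  apply Subset.antisymm
  · rintro _ ⟨_, ⟨n, rfl⟩, rfl⟩
    exact ⟨n + 1, iterate_succ_apply' f n a⟩
  · rintro _ ⟨n, rfl⟩
    refine ⟨_, ⟨n + (p - 1), rfl⟩, ?_⟩
    calc f (f^[n + (p - 1)] a) = f^[n + p] a := by
          rw [← iterate_succ_apply' f, Nat.succ_eq_add_one, add_assoc, Nat.sub_add_cancel hp]
      _ = f^[n] a := by rw [iterate_add_apply, hper.eq]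

theorem eq_iterate_of_backward_orbit (hz : ∀ i, z i = f (z (i + 1))) (i n : ℕ) :
    z i = f^[n] (z (i + n)) := by
  induction n with
  | zero => rfl
  | succ n ih => rw [ih, hz (i + n), iterate_succ_apply, add_assoc]

theorem injective_backward_orbit_of_periodicPts_eq_empty (hf : periodicPts f = ∅)
    (hz : ∀ i, z i = f (z (i + 1))) :
    Injective z := by
  refine .of_lt_imp_ne fun k l hkl hzkl ↦ ?_
  have hper : IsPeriodicPt f (l - k) (z l) := by
    calc f^[l - k] (z l) = f^[l - k] (z (k + (l - k))) := by rw [Nat.add_sub_cancel' hkl.le]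
      _ = z k := (eq_iterate_of_backward_orbit hz k (l - k)).symm
      _ = z l := hzkl
  exact hf.subset (mk_mem_periodicPts (Nat.sub_pos_of_lt hkl) hper)

end Orbits

section Minimal

variable {Z : Type*} [TopologicalSpace Z] [T1Space Z] [Infinite Z] {f : Z → Z}

theorem periodicPts_eq_empty_of_minimal
    (hmin : ∀ A : Set Z, IsClosed A → f '' A = A → A = ∅ ∨ A = univ) :
    periodicPts f = ∅ := by
  refine eq_empty_of_forall_notMem fun a ha ↦ ?_
  have hfin := finite_range_iterate_of_mem_periodicPts ha
  rcases hmin _ hfin.isClosed (image_range_iterate_of_mem_periodicPts ha) with hempty | huniv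
  · exact (range_nonempty _).ne_empty hempty
  · exact infinite_univ (huniv ▸ hfin)

theorem stmt8_general
    (hmin : ∀ A : Set Z, IsClosed A → f '' A = A → A = ∅ ∨ A = univ)
    {z : ℕ → Z} (hz : ∀ i, z i = f (z (i + 1))) : Injective z :=
  injective_backward_orbit_of_periodicPts_eq_empty (periodicPts_eq_empty_of_minimal hmin) hz

end Minimal

/-- The shift on the infinite path space of the topological graph associated
to a minimal homeomorphism `ρ` of an infinite T1 space is free: if two shifts
of an infinite path agree, the shift amounts are equal. -/
theorem stmt8 {Z X : Type*} [TopologicalSpace Z] [T1Space Z] [Infinite Z] [TopologicalSpace X]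
    (ρ : Z ≃ₜ Z)
    (hmin : ∀ A : Set Z, IsClosed A → (⇑ρ) '' A = A → A = ∅ ∨ A = Set.univ)
    (x : ℕ → X) :
    ∀ e : ℕ → Z × X × ℕ,
      (∀ i : ℕ, (e i).1 = ρ ((e (i + 1)).1) ∧ (e i).2.1 = x ((e (i + 1)).2.2)) →
      ∀ k l : ℕ, (∀ i : ℕ, e (i + k) = e (i + l)) → k = l := by
  intro e he k l h
  exact stmt8_general hmin (fun i ↦ (he i).1) (by simpa using congrArg Prod.fst (h 0))
end

section
/- Let G be an abelian group (written additively) and let u ∈ G be an element of infinite order, i.e. n • u ≠ 0 for every integer n ≥ 1. Then there exists a group homomorphism φ : G → ℝ with φ(u) = 1. -/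
/-!
Since `u` has infinite order, `n ↦ n • u` embeds `ℤ` into `G`. A divisible group is an injective
`ℤ`-module by Baer's criterion, so the homomorphism from `ℤ` sending `1` to any prescribed element
extends along this embedding to all of `G`.
-/

theorem exists_linearMap_apply_eq_of_baer {R M Q : Type*} [Ring R] [AddCommGroup M] [Module R M]
    [AddCommGroup Q] [Module R Q] (hQ : Module.Baer R Q) {u : M}
    (hu : Function.Injective fun r : R ↦ r • u) (q : Q) : ∃ φ : M →ₗ[R] Q, φ u = q := by
  obtain ⟨φ, hφ⟩ := hQ.extension_property (LinearMap.toSpanSingleton R M u) hu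
    (LinearMap.toSpanSingleton R Q q)
  exact ⟨φ, by simpa using LinearMap.congr_fun hφ 1⟩

theorem not_isOfFinAddOrder_iff_forall_one_le_zsmul_ne_zero {G : Type*} [AddGroup G] {u : G} :
    ¬IsOfFinAddOrder u ↔ ∀ n : ℤ, 1 ≤ n → n • u ≠ 0 := by
  rw [isOfFinAddOrder_iff_nsmul_eq_zero]
  push Not
  refine ⟨fun hu n hn ↦ ?_, fun hu n hn ↦ ?_⟩
  · lift n to ℕ using by lia
    rw [natCast_zsmul]
    exact hu n (by lia)
  · rw [← natCast_zsmul]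
    exact hu n (by lia)

theorem stmt9_general {G A : Type*} [AddCommGroup G] [AddCommGroup A] [DivisibleBy A ℤ] {u : G}
    (hu : ¬IsOfFinAddOrder u) (a : A) : ∃ φ : G →+ A, φ u = a := by
  obtain ⟨φ, hφ⟩ := exists_linearMap_apply_eq_of_baer (Module.Baer.of_divisible A)
    (injective_zsmul_iff_not_isOfFinAddOrder.mpr hu) a
  exact ⟨φ.toAddMonoidHom, hφ⟩

/-- If `u` is an element of infinite order in an abelian group `G`, then there
is a group homomorphism `φ : G → ℝ` with `φ(u) = 1`. -/
theorem stmt9 {G : Type*} [AddCommGroup G] (u : G)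
    (hu : ∀ n : ℤ, 1 ≤ n → n • u ≠ 0) :
    ∃ φ : G →+ ℝ, φ u = 1 :=
  stmt9_general (not_isOfFinAddOrder_iff_forall_one_le_zsmul_ne_zero.mpr hu) 1
end
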